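/- Let D_T and {D_{S_i}}_{i=1}^k be the target distribution and k source distributions over X with labeling functions f_T and f_{S_i}, and let H be a hypothesis class of binary classifiers with VC-dimension d. Let D̂_T and {D̂_{S_i}}_{i=1}^k be the empirical distributions formed from m i.i.d. samples from each domain (with m ≥ 2d), and let ε̂_{S_i}(h) be the empirical risks on the source samples. Let h* ∈ H minimize ε_T(h) + max_{i∈[k]} ε_{S_i}(h) and set λ := ε_T(h*) + max_{i∈[k]} ε_{S_i}(h*). Then for every 0 < δ < 1, with probability at least 1 − δ over the choice of samples, for every h ∈ H: ε_T(h) ≤ max_{i∈[k]} ε̂_{S_i}(h) + √((1/(2m))·(log(4k/δ) + d·log(me/d))) + (1/2)·d_{HΔH}(D̂_T; {D̂_{S_i}}_{i=1}^k) + √((2/m)·(log(8k/δ) + 2d·log(me/(2d)))) + λ. -/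

import Mathlib

open MeasureTheory Real Filter
open scoped ENNReal NNReal

noncomputable section

variable {X : Type*}

/-- Error of `g` w.r.t. `g'` under distribution `D`: `E_{x ~ D} |g x - g' x|`. -/
def errE [MeasurableSpace X] (D : Measure X) (g g' : X → ℝ) : ℝ :=
  ∫ x, |g x - g' x| ∂D

/-- A binary hypothesis takes values in `{0, 1}`. -/
def IsBinary (h : X → ℝ) : Prop := ∀ x, h x = 0 ∨ h x = 1

/-- The collection `A_H` of supports of hypotheses in a class `H`. -/
def supports (H : Set (X → ℝ)) : Set (Set X) := {A | ∃ h ∈ H, A = {x | h x = 1}}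

/-- `H`-divergence between two distributions:
`d_H(D, D') = 2 sup_{A ∈ A_H} |Pr_D(A) - Pr_{D'}(A)|`. -/
def dHdiv [MeasurableSpace X] (H : Set (X → ℝ)) (D D' : Measure X) : ℝ :=
  2 * sSup {r | ∃ h ∈ H, r = |(D {x | h x = 1}).toReal - (D' {x | h x = 1}).toReal|}

/-- Symmetric difference hypothesis class `H Δ H`
(`h ⊕ h'` is `|h - h'|` for `{0,1}`-valued functions). -/
def symmDiffClass (H : Set (X → ℝ)) : Set (X → ℝ) :=
  {g | ∃ h ∈ H, ∃ h' ∈ H, g = fun x => |h x - h' x|}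

/-- Multi-source divergence: `d_H(D_T; {D_{S_i}}) = max_i d_H(D_T, D_{S_i})`. -/
def dHmulti [MeasurableSpace X] (H : Set (X → ℝ)) (DT : Measure X) {k : ℕ}
    (DS : Fin k → Measure X) : ℝ :=
  ⨆ i : Fin k, dHdiv H DT (DS i)

/-- A set family `C` shatters a finite set `s`. -/
def ShattersSet (C : Set (Set X)) (s : Finset X) : Prop :=
  ∀ t : Set X, t ⊆ (s : Set X) → ∃ A ∈ C, (s : Set X) ∩ A = t

/-- The VC dimension of a set family `C` equals `d`. -/
def VCDimEq (C : Set (Set X)) (d : ℕ) : Prop :=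
  (∃ s : Finset X, s.card = d ∧ ShattersSet C s) ∧
  ∀ s : Finset X, ShattersSet C s → s.card ≤ d

/-- Empirical (uniform) measure of a sample of size `m`. -/
def empMeasure [MeasurableSpace X] {m : ℕ} (xs : Fin m → X) : Measure X :=
  (m : ℝ≥0∞)⁻¹ • ∑ i, Measure.dirac (xs i)

/-- Empirical risk of `h` w.r.t. labeling `f` over the sample `xs`. -/
def empRisk {m : ℕ} (xs : Fin m → X) (h f : X → ℝ) : ℝ :=
  (∑ i, |h (xs i) - f (xs i)|) / m

/-!
Fix a source sample, an index `i` and the hypothesis `h*`. The triangle inequality on both domains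
gives `ε_T(h) ≤ ε̂_{S_i}(h) + (ε_T(h, h*) - ε̂_{S_i}(h, h*)) + ε_T(h*) + ε̂_{S_i}(h*)`. Only the
single hypothesis `h*` has to be controlled on the source sample. On the target sample
`½ d_{HΔH}(D̂_T, D̂_{S_i})` is the supremum over the class of an empirical quantity, and it has to
dominate `sup_h (ε_T(h, h*) - ε̂_{S_i}(h, h*))`, a supremum of true quantities: for this it suffices
that the empirical mean of one near-maximizer, chosen before the target sample is drawn, does not
fall far below its expectation. Hence two applications of Hoeffding's inequality replace a uniform
deviation bound.
-/

lemma IsBinary.mem_Icc {h : X → ℝ} (hh : IsBinary h) (x : X) : h x ∈ Set.Icc (0 : ℝ) 1 := by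
  rcases hh x with hx | hx <;> simp [hx]

lemma IsBinary.eq_of_setOf_eq_one_eq {h h' : X → ℝ} (hh : IsBinary h) (hh' : IsBinary h')
    (heq : {x | h x = 1} = {x | h' x = 1}) : h = h' := by
  funext x
  have hiff : h x = 1 ↔ h' x = 1 := Set.ext_iff.1 heq x
  rcases hh x with hx | hx <;> rcases hh' x with hx' | hx' <;> simp_all

lemma empRisk_nonneg {m : ℕ} (xs : Fin m → X) (h f : X → ℝ) : 0 ≤ empRisk xs h f :=
  div_nonneg (Finset.sum_nonneg fun _ _ => abs_nonneg _) m.cast_nonneg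

section EmpiricalMeasure

variable [MeasurableSpace X] {m : ℕ}

instance isFiniteMeasure_empMeasure (xs : Fin m → X) : IsFiniteMeasure (empMeasure xs) where
  measure_univ_lt_top := by
    have hle : (m : ℝ≥0∞)⁻¹ * m ≤ 1 := ENNReal.inv_mul_le_one _
    simpa [empMeasure] using hle.trans_lt ENNReal.one_lt_top

lemma isProbabilityMeasure_empMeasure (hm : 0 < m) (xs : Fin m → X) :
    IsProbabilityMeasure (empMeasure xs) where
  measure_univ := by
    simpa [empMeasure] using ENNReal.inv_mul_cancel (Nat.cast_ne_zero.2 hm.ne')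
      (ENNReal.natCast_ne_top m)

lemma integral_empMeasure (xs : Fin m → X) {g : X → ℝ} (hg : Measurable g) :
    ∫ x, g x ∂empMeasure xs = (∑ i, g (xs i)) / m := by
  have hint : ∀ i ∈ Finset.univ, Integrable g (Measure.dirac (xs i)) := fun i _ =>
    integrable_dirac' hg.stronglyMeasurable enorm_lt_top
  rw [empMeasure, integral_smul_measure, integral_finsetSum_measure hint]
  simp only [integral_dirac' g _ hg.stronglyMeasurable, ENNReal.toReal_inv, ENNReal.toReal_natCast,
    smul_eq_mul, div_eq_inv_mul]

lemma measurable_empRisk {h f : X → ℝ} (hh : Measurable h) (hf : Measurable f) :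
    Measurable fun xs : Fin m → X => empRisk xs h f := by
  unfold empRisk
  fun_prop

lemma empRisk_eq_errE_empMeasure (xs : Fin m → X) {h f : X → ℝ} (hh : Measurable h)
    (hf : Measurable f) : empRisk xs h f = errE (empMeasure xs) h f :=
  (integral_empMeasure xs (hh.sub hf).abs).symm

end EmpiricalMeasure

section Risk

variable [MeasurableSpace X] {D : Measure X} {f g h h' : X → ℝ}

lemma errE_nonneg (D : Measure X) (g g' : X → ℝ) : 0 ≤ errE D g g' :=
  integral_nonneg fun _ => abs_nonneg _

lemma errE_comm (D : Measure X) (g g' : X → ℝ) : errE D g g' = errE D g' g := by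
  simp only [errE, abs_sub_comm]

lemma errE_triangle (hf : Integrable f D) (hg : Integrable g D) (hh : Integrable h D) :
    errE D f h ≤ errE D f g + errE D g h := by
  calc errE D f h ≤ ∫ x, (|f x - g x| + |g x - h x|) ∂D :=
        integral_mono (hf.sub hh).abs ((hf.sub hg).abs.add (hg.sub hh).abs)
          fun x => abs_sub_le (f x) (g x) (h x)
    _ = errE D f g + errE D g h := integral_add (hf.sub hg).abs (hg.sub hh).abs

lemma IsBinary.integrable [IsFiniteMeasure D] (hh : IsBinary h) (hm : Measurable h) :
    Integrable h D :=
  Integrable.of_mem_Icc 0 1 hm.aemeasurable (.of_forall hh.mem_Icc)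

lemma IsBinary.measureReal_abs_sub_eq_one (hh : IsBinary h) (hh' : IsBinary h')
    (hm : Measurable h) (hm' : Measurable h') :
    D.real {x | |h x - h' x| = 1} = errE D h h' := by
  have hindicator : (fun x => |h x - h' x|) = {x | |h x - h' x| = 1}.indicator 1 := by
    funext x
    rcases hh x with hx | hx <;> rcases hh' x with hx' | hx' <;> simp [Set.indicator, hx, hx']
  rw [errE, hindicator, integral_indicator_one (measurableSet_eq_fun (by fun_prop) (by fun_prop))]

end Risk

section Divergence

variable [MeasurableSpace X] {H : Set (X → ℝ)}

lemma dHdiv_nonneg (H : Set (X → ℝ)) (D D' : Measure X) : 0 ≤ dHdiv H D D' :=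
  mul_nonneg zero_le_two <| Real.sSup_nonneg <| by rintro _ ⟨h, -, rfl⟩; exact abs_nonneg _

lemma dHmulti_nonneg (H : Set (X → ℝ)) (D : Measure X) {k : ℕ} (D' : Fin k → Measure X) :
    0 ≤ dHmulti H D D' :=
  Real.iSup_nonneg fun i => dHdiv_nonneg H D (D' i)

lemma dHdiv_le_dHmulti (H : Set (X → ℝ)) (D : Measure X) {k : ℕ} (D' : Fin k → Measure X)
    (i : Fin k) : dHdiv H D (D' i) ≤ dHmulti H D D' :=
  le_ciSup (f := fun i => dHdiv H D (D' i)) (Set.finite_range _).bddAbove i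

lemma abs_measureReal_sub_le_dHdiv {h : X → ℝ} (hH : h ∈ H) (D D' : Measure X) [IsFiniteMeasure D]
    [IsFiniteMeasure D'] :
    |D.real {x | h x = 1} - D'.real {x | h x = 1}| ≤ 1 / 2 * dHdiv H D D' := by
  have hbdd : BddAbove {r | ∃ h ∈ H, r = |D.real {x | h x = 1} - D'.real {x | h x = 1}|} := by
    refine ⟨max (D.real Set.univ) (D'.real Set.univ), ?_⟩
    rintro _ ⟨g, -, rfl⟩
    exact abs_sub_le_of_nonneg_of_le
      measureReal_nonneg ((measureReal_mono (Set.subset_univ _)).trans (le_max_left _ _))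
      measureReal_nonneg ((measureReal_mono (Set.subset_univ _)).trans (le_max_right _ _))
  have hle := le_csSup hbdd ⟨h, hH, rfl⟩
  simp only [dHdiv, ← Measure.real_def]
  linarith

lemma abs_errE_sub_errE_le_dHdiv (hbin : ∀ h ∈ H, IsBinary h) (hmeas : ∀ h ∈ H, Measurable h)
    {h h' : X → ℝ} (hh : h ∈ H) (hh' : h' ∈ H) (D D' : Measure X) [IsFiniteMeasure D]
    [IsFiniteMeasure D'] :
    |errE D h h' - errE D' h h'| ≤ 1 / 2 * dHdiv (symmDiffClass H) D D' := by
  have hmem : (fun x => |h x - h' x|) ∈ symmDiffClass H := ⟨h, hh, h', hh', rfl⟩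
  simpa only [(hbin h hh).measureReal_abs_sub_eq_one (hbin h' hh') (hmeas h hh) (hmeas h' hh')]
    using abs_measureReal_sub_le_dHdiv hmem D D'

end Divergence

section VCDimension

lemma VCDimEq.subsingleton_of_zero {C : Set (Set X)} (hC : VCDimEq C 0) : C.Subsingleton := by
  have mem_of_mem : ∀ A ∈ C, ∀ B ∈ C, A ⊆ B := by
    intro A hA B hB x hxA
    by_contra hxB
    have hshatters : ShattersSet C {x} := by
      intro t ht
      rw [Finset.coe_singleton] at ht ⊢
      rcases Set.subset_singleton_iff_eq.1 ht with rfl | rfl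
      · exact ⟨B, hB, Set.singleton_inter_eq_empty.2 hxB⟩
      · exact ⟨A, hA, Set.inter_eq_left.2 (Set.singleton_subset_iff.2 hxA)⟩
    simpa using hC.2 {x} hshatters
  exact fun A hA B hB => (mem_of_mem A hA B hB).antisymm (mem_of_mem B hB A hA)

lemma subsingleton_of_vcDimEq_supports_zero {H : Set (X → ℝ)} (hbin : ∀ h ∈ H, IsBinary h)
    (hH : VCDimEq (supports H) 0) : H.Subsingleton := fun h hh h' hh' =>
  (hbin h hh).eq_of_setOf_eq_one_eq (hbin h' hh')
    (hH.subsingleton_of_zero ⟨h, hh, rfl⟩ ⟨h', hh', rfl⟩)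

end VCDimension

section Measure

lemma ofReal_one_sub_le_measure_compl {Ω : Type*} [MeasurableSpace Ω] {P : Measure Ω}
    [IsProbabilityMeasure P] {s : Set Ω} {p : ℝ} (hs : P.real s ≤ p) :
    ENNReal.ofReal (1 - p) ≤ P sᶜ := by
  have hone : 1 ≤ P.real s + P.real sᶜ := by
    simpa using measureReal_union_le (μ := P) s sᶜ
  exact (ENNReal.ofReal_le_iff_le_toReal (measure_ne_top P _)).2
    (by rw [← Measure.real_def]; linarith)

/- `G` and `B` need not be measurable: Markov's inequality is applied to a measurable superset
of `G`. -/
lemma mul_measure_le_prod_of_forall_le {α β : Type*} [MeasurableSpace α] [MeasurableSpace β]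
    (μ : Measure α) (ν : Measure β) [SFinite μ] [SFinite ν] {G : Set (α × β)} {B : Set β}
    {c : ℝ≥0∞} (hG : ∀ y ∈ B, c ≤ μ {x | (x, y) ∈ G}) : c * ν B ≤ (μ.prod ν) G := by
  set M := toMeasurable (μ.prod ν) G
  have hM : MeasurableSet M := measurableSet_toMeasurable _ _
  have hB : B ⊆ {y | c ≤ μ ((fun x => (x, y)) ⁻¹' M)} := fun y hy =>
    (hG y hy).trans (measure_mono fun x hx => subset_toMeasurable _ _ hx)
  calc c * ν B ≤ c * ν {y | c ≤ μ ((fun x => (x, y)) ⁻¹' M)} := by gcongr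
    _ ≤ ∫⁻ y, μ ((fun x => (x, y)) ⁻¹' M) ∂ν :=
        mul_meas_ge_le_lintegral (measurable_measure_prodMk_right hM) c
    _ = (μ.prod ν) G := by rw [← Measure.prod_apply_symm hM, measure_toMeasurable]

end Measure

section Concentration

variable [MeasurableSpace X] {m : ℕ} {D : Measure X} [IsProbabilityMeasure D] {a b t : ℝ}

lemma measureReal_le_integral_empMeasure_sub_le_exp (hm : 0 < m) {g : X → ℝ} (hg : Measurable g)
    (hab : ∀ x, g x ∈ Set.Icc a b) (ht : 0 ≤ t) :
    (Measure.pi fun _ : Fin m => D).real {xs | t ≤ ∫ x, g x ∂empMeasure xs - ∫ x, g x ∂D}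
      ≤ Real.exp (-(2 * m * t ^ 2 / (b - a) ^ 2)) := by
  set P := Measure.pi fun _ : Fin m => D
  have hm' : (0 : ℝ) < m := Nat.cast_pos.2 hm
  have hindep : ProbabilityTheory.iIndepFun
      (fun (i : Fin m) (xs : Fin m → X) => g (xs i) - ∫ x, g x ∂D) P :=
    ProbabilityTheory.iIndepFun_pi (X := fun _ x => g x - ∫ x, g x ∂D)
      fun _ => (hg.sub_const _).aemeasurable
  have hsubG : ∀ i ∈ (Finset.univ : Finset (Fin m)), ProbabilityTheory.HasSubgaussianMGF
      (fun xs : Fin m → X => g (xs i) - ∫ x, g x ∂D) ((‖b - a‖₊ / 2) ^ 2) P := by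
    intro i _
    simpa only [P, integral_comp_eval (μ := fun _ : Fin m => D) hg.aestronglyMeasurable] using
      ProbabilityTheory.hasSubgaussianMGF_of_mem_Icc (μ := P) (X := fun xs => g (xs i))
        (hg.comp (measurable_pi_apply i)).aemeasurable (.of_forall fun xs => hab (xs i))
  have hevent : {xs : Fin m → X | t ≤ ∫ x, g x ∂empMeasure xs - ∫ x, g x ∂D}
      = {xs | m * t ≤ ∑ i, (g (xs i) - ∫ x, g x ∂D)} := by
    ext xs
    have hsum : ∑ i, (g (xs i) - ∫ x, g x ∂D)
        = m * (∫ x, g x ∂empMeasure xs - ∫ x, g x ∂D) := by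
      rw [integral_empMeasure xs hg, mul_sub, mul_div_cancel₀ _ hm'.ne']
      simp
    simp only [Set.mem_ofPred_eq, hsum, mul_le_mul_iff_right₀ hm']
  rw [hevent]
  refine (ProbabilityTheory.HasSubgaussianMGF.measure_sum_ge_le_of_iIndepFun hindep hsubG
    (by positivity)).trans_eq ?_
  congr 1
  simp only [Finset.sum_const, Finset.card_univ, Fintype.card_fin, nsmul_eq_mul, NNReal.coe_mul,
    NNReal.coe_natCast, NNReal.coe_pow, NNReal.coe_div, coe_nnnorm, Real.norm_eq_abs,
    NNReal.coe_ofNat, div_pow, sq_abs]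
  field_simp

lemma le_measure_integral_empMeasure_lt (hm : 0 < m) {g : X → ℝ} (hg : Measurable g)
    (hab : ∀ x, g x ∈ Set.Icc a b) (ht : 0 ≤ t) :
    ENNReal.ofReal (1 - Real.exp (-(2 * m * t ^ 2 / (b - a) ^ 2))) ≤
      (Measure.pi fun _ : Fin m => D) {xs | ∫ x, g x ∂empMeasure xs < ∫ x, g x ∂D + t} := by
  have hcompl : {xs : Fin m → X | ∫ x, g x ∂empMeasure xs < ∫ x, g x ∂D + t}
      = {xs | t ≤ ∫ x, g x ∂empMeasure xs - ∫ x, g x ∂D}ᶜ := by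
    ext xs
    simp only [Set.mem_ofPred_eq, Set.mem_compl_iff, not_le, sub_lt_iff_lt_add']
  rw [hcompl]
  exact ofReal_one_sub_le_measure_compl
    (measureReal_le_integral_empMeasure_sub_le_exp hm hg hab ht)

lemma le_measure_lt_integral_empMeasure (hm : 0 < m) {g : X → ℝ} (hg : Measurable g)
    (hab : ∀ x, g x ∈ Set.Icc a b) (ht : 0 ≤ t) :
    ENNReal.ofReal (1 - Real.exp (-(2 * m * t ^ 2 / (b - a) ^ 2))) ≤
      (Measure.pi fun _ : Fin m => D) {xs | ∫ x, g x ∂D < ∫ x, g x ∂empMeasure xs + t} := by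
  have hneg : ∀ x, -g x ∈ Set.Icc (-b) (-a) := fun x =>
    ⟨neg_le_neg (hab x).2, neg_le_neg (hab x).1⟩
  have hle := le_measure_integral_empMeasure_lt (D := D) hm hg.neg hneg ht
  simp only [Pi.neg_apply, integral_neg, neg_sub_neg] at hle
  refine hle.trans (measure_mono fun xs hxs => ?_)
  simp only [Set.mem_ofPred_eq] at hxs ⊢
  linarith

/- A near-maximizer `j` of `∫ g j ∂D - c j` does not depend on the sample, so one application of
Hoeffding's inequality controls the whole family. Passing to the limit in the quality of the
near-maximizer restores the full deviation `t`. -/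
lemma le_measure_forall_integral_sub_le (hm : 0 < m) {ι : Type*} [Nonempty ι] {g : ι → X → ℝ}
    (hg : ∀ i, Measurable (g i)) (hab : ∀ i x, g i x ∈ Set.Icc a b) {c : ι → ℝ}
    {Φ : (Fin m → X) → ℝ} (hΦ : ∀ xs i, ∫ x, g i x ∂empMeasure xs - c i ≤ Φ xs) (ht : 0 < t) :
    ENNReal.ofReal (1 - Real.exp (-(2 * m * t ^ 2 / (b - a) ^ 2))) ≤
      (Measure.pi fun _ : Fin m => D) {xs | ∀ i, ∫ x, g i x ∂D - c i ≤ Φ xs + t} := by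
  set u : ι → ℝ := fun i => ∫ x, g i x ∂D - c i
  have hbdd : BddAbove (Set.range u) := by
    obtain ⟨x₀⟩ := nonempty_of_isProbabilityMeasure D
    set xs₀ : Fin m → X := fun _ => x₀
    have := isProbabilityMeasure_empMeasure hm xs₀
    have hmem (i : ι) (P : Measure X) [IsProbabilityMeasure P] : ∫ x, g i x ∂P ∈ Set.Icc a b :=
      (convex_Icc a b).integral_mem isClosed_Icc (.of_forall (hab i))
        (.of_mem_Icc a b (hg i).aemeasurable (.of_forall (hab i)))
    refine ⟨b - a + Φ xs₀, ?_⟩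
    rintro _ ⟨i, rfl⟩
    linarith [hΦ xs₀ i, (hmem i D).2, (hmem i (empMeasure xs₀)).1]
  have hlt : ∀ s ∈ Set.Ioo 0 t, ENNReal.ofReal (1 - Real.exp (-(2 * m * s ^ 2 / (b - a) ^ 2))) ≤
      (Measure.pi fun _ : Fin m => D) {xs | ∀ i, u i ≤ Φ xs + t} := by
    rintro s ⟨hs0, hst⟩
    obtain ⟨j, hj⟩ : ∃ j, (⨆ i, u i) - (t - s) < u j :=
      exists_lt_of_lt_ciSup (sub_lt_self _ (sub_pos.2 hst))
    refine (le_measure_lt_integral_empMeasure hm (hg j) (hab j) hs0.le).trans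
      (measure_mono fun xs hxs i => ?_)
    simp only [Set.mem_ofPred_eq] at hxs
    have hui : u i ≤ ⨆ i, u i := le_ciSup hbdd i
    have huj : u j = ∫ x, g j x ∂D - c j := rfl
    linarith [hΦ xs j, hui, huj]
  have hcont : Continuous fun s : ℝ =>
      ENNReal.ofReal (1 - Real.exp (-(2 * m * s ^ 2 / (b - a) ^ 2))) :=
    ENNReal.continuous_ofReal.comp (by fun_prop)
  refine le_of_tendsto (hcont.continuousWithinAt (s := Set.Iio t) (x := t)) ?_
  filter_upwards [Ioo_mem_nhdsLT ht] using hlt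

end Concentration

section Transfer

variable [MeasurableSpace X] {m : ℕ} {D : Measure X} [IsProbabilityMeasure D] {H : Set (X → ℝ)}
  {hstar : X → ℝ} {t : ℝ}

lemma le_measure_forall_errE_le_add_dHdiv (hm : 0 < m) (hbin : ∀ h ∈ H, IsBinary h)
    (hmeas : ∀ h ∈ H, Measurable h) (hstarH : hstar ∈ H) (Q : Measure X) [IsFiniteMeasure Q]
    (ht : 0 < t) :
    ENNReal.ofReal (1 - Real.exp (-(2 * m * t ^ 2))) ≤
      (Measure.pi fun _ : Fin m => D) {xs | ∀ h ∈ H, errE D h hstar ≤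
        errE Q h hstar + 1 / 2 * dHdiv (symmDiffClass H) (empMeasure xs) Q + t} := by
  have : Nonempty H := ⟨hstar, hstarH⟩
  have hmem (h : H) (x : X) : |h.1 x - hstar x| ∈ Set.Icc (0 : ℝ) 1 :=
    ⟨abs_nonneg _, Real.dist_le_of_mem_Icc_01 ((hbin h h.2).mem_Icc x)
      ((hbin hstar hstarH).mem_Icc x)⟩
  have hdom (xs : Fin m → X) (h : H) :
      errE (empMeasure xs) h hstar - errE Q h hstar ≤
        1 / 2 * dHdiv (symmDiffClass H) (empMeasure xs) Q :=
    (le_abs_self _).trans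
      (abs_errE_sub_errE_le_dHdiv hbin hmeas h.2 hstarH (empMeasure xs) Q)
  have hle := le_measure_forall_integral_sub_le (D := D) hm
    (fun h : H => ((hmeas h h.2).sub (hmeas hstar hstarH)).abs) hmem hdom ht
  rw [sub_zero, one_pow, div_one] at hle
  refine hle.trans (measure_mono fun xs hxs h hh => ?_)
  have hh := hxs ⟨h, hh⟩
  change errE D h hstar - errE Q h hstar ≤ _ at hh
  linarith

lemma le_measure_forall_errE_le_of_source (hm : 0 < m) (hbin : ∀ h ∈ H, IsBinary h)
    (hmeas : ∀ h ∈ H, Measurable h) (hstarH : hstar ∈ H) {f f' : X → ℝ} (hf : Integrable f D)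
    (Q : Measure X) [IsFiniteMeasure Q] (hf' : Integrable f' Q) (ht : 0 < t) :
    ENNReal.ofReal (1 - Real.exp (-(2 * m * t ^ 2))) ≤
      (Measure.pi fun _ : Fin m => D) {xs | ∀ h ∈ H, errE D h f ≤
        errE Q h f' + 1 / 2 * dHdiv (symmDiffClass H) (empMeasure xs) Q + t
          + (errE D hstar f + errE Q hstar f')} := by
  refine (le_measure_forall_errE_le_add_dHdiv hm hbin hmeas hstarH Q ht).trans
    (measure_mono fun xs hxs h hh => ?_)
  have htarget : errE D h f ≤ errE D h hstar + errE D hstar f :=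
    errE_triangle ((hbin h hh).integrable (hmeas h hh))
      ((hbin hstar hstarH).integrable (hmeas hstar hstarH)) hf
  have hsource : errE Q h hstar ≤ errE Q h f' + errE Q hstar f' :=
    errE_comm Q hstar f' ▸ errE_triangle ((hbin h hh).integrable (hmeas h hh)) hf'
      ((hbin hstar hstarH).integrable (hmeas hstar hstarH))
  linarith [hxs h hh]

lemma le_measure_empRisk_lt (hm : 0 < m) {h f : X → ℝ} (hh : IsBinary h) (hhm : Measurable h)
    (hf : Measurable f) (hfb : ∀ x, f x ∈ Set.Icc (0 : ℝ) 1) (ht : 0 ≤ t) :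
    ENNReal.ofReal (1 - Real.exp (-(2 * m * t ^ 2))) ≤
      (Measure.pi fun _ : Fin m => D) {xs | empRisk xs h f < errE D h f + t} := by
  have hmem (x : X) : |h x - f x| ∈ Set.Icc (0 : ℝ) 1 :=
    ⟨abs_nonneg _, Real.dist_le_of_mem_Icc_01 (hh.mem_Icc x) (hfb x)⟩
  have hle := le_measure_integral_empMeasure_lt (D := D) hm (hhm.sub hf).abs hmem ht
  rw [sub_zero, one_pow, div_one] at hle
  simp only [empRisk_eq_errE_empMeasure _ hhm hf]
  exact hle

/- The source sample is fixed first, so that the transfer to the target is a statement about the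
deterministic measure `empMeasure (ω.2 i)`. -/
lemma le_prod_measure_forall_errE_le {ι : Type*} [Fintype ι] (hm : 0 < m) (DS : ι → Measure X)
    [∀ i, IsProbabilityMeasure (DS i)] (i : ι) {f f' : X → ℝ} (hf : Integrable f D)
    (hf' : Measurable f') (hfb' : ∀ x, f' x ∈ Set.Icc (0 : ℝ) 1) (hbin : ∀ h ∈ H, IsBinary h)
    (hmeas : ∀ h ∈ H, Measurable h) (hstarH : hstar ∈ H) (ht : 0 < t) :
    ENNReal.ofReal (1 - Real.exp (-(2 * m * t ^ 2))) *
        ENNReal.ofReal (1 - Real.exp (-(2 * m * t ^ 2))) ≤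
      ((Measure.pi fun _ : Fin m => D).prod
          (Measure.pi fun i : ι => Measure.pi fun _ : Fin m => DS i))
        {ω : (Fin m → X) × (ι → Fin m → X) | ∀ h ∈ H, errE D h f ≤
          empRisk (ω.2 i) h f' + t
            + 1 / 2 * dHdiv (symmDiffClass H) (empMeasure ω.1) (empMeasure (ω.2 i)) + t
            + (errE D hstar f + errE (DS i) hstar f')} := by
  set ν := Measure.pi fun i : ι => Measure.pi fun _ : Fin m => DS i
  set B : Set (Fin m → X) := {ys : Fin m → X | empRisk ys hstar f' < errE (DS i) hstar f' + t}
  have hBmeas : MeasurableSet B :=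
    measurableSet_lt (measurable_empRisk (hmeas hstar hstarH) hf') measurable_const
  have hB : ENNReal.ofReal (1 - Real.exp (-(2 * m * t ^ 2))) ≤ ν (Function.eval i ⁻¹' B) := by
    rw [(measurePreserving_eval _ i).measure_preimage hBmeas.nullMeasurableSet]
    exact le_measure_empRisk_lt hm (hbin hstar hstarH) (hmeas hstar hstarH) hf' hfb' ht.le
  refine (mul_le_mul_right hB _).trans (mul_measure_le_prod_of_forall_le _ ν fun ys hys => ?_)
  have hint : Integrable f' (empMeasure (ys i)) :=
    .of_mem_Icc 0 1 hf'.aemeasurable (.of_forall hfb')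
  refine (le_measure_forall_errE_le_of_source hm hbin hmeas hstarH hf (empMeasure (ys i)) hint
    ht).trans (measure_mono fun xs hxs h hh => ?_)
  have hstar_le : empRisk (ys i) hstar f' < errE (DS i) hstar f' + t := hys
  have hrisk := hxs h hh
  rw [← empRisk_eq_errE_empMeasure _ (hmeas h hh) hf',
    ← empRisk_eq_errE_empMeasure _ (hmeas hstar hstarH) hf'] at hrisk
  linarith

end Transfer

section Rates

variable {m : ℕ} {δ : ℝ}

lemma exp_neg_two_mul_sq_sqrt_log_div (hm : 0 < m) (hδ : 0 < δ) (hδ2 : δ ≤ 2) :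
    Real.exp (-(2 * m * √(Real.log (2 / δ) / (2 * m)) ^ 2)) = δ / 2 := by
  have hlog : 0 ≤ Real.log (2 / δ) := Real.log_nonneg ((one_le_div hδ).2 hδ2)
  rw [Real.sq_sqrt (by positivity), mul_div_cancel₀ _ (by positivity), Real.exp_neg,
    Real.exp_log (by positivity), inv_div]

lemma mul_log_mul_exp_one_div_nonneg {a x : ℝ} (ha : 0 ≤ a) (hax : a ≤ x) :
    0 ≤ a * Real.log (x * Real.exp 1 / a) := by
  rcases ha.eq_or_lt with rfl | ha
  · simp
  have hx : x ≤ x * Real.exp 1 :=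
    le_mul_of_one_le_right (ha.le.trans hax) (Real.one_le_exp zero_le_one)
  exact mul_nonneg ha.le (Real.log_nonneg ((one_le_div ha).2 (hax.trans hx)))

lemma sqrt_log_div_le_sqrt_mul_log_add {c K A : ℝ} (hδ : 0 < δ) (hδ2 : δ ≤ 2)
    (hc : 1 / (2 * m) ≤ c) (hK : 2 ≤ K) (hA : 0 ≤ A) :
    √(Real.log (2 / δ) / (2 * m)) ≤ √(c * (Real.log (K / δ) + A)) := by
  have hlog : 0 ≤ Real.log (2 / δ) := Real.log_nonneg ((one_le_div hδ).2 hδ2)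
  have hlogK : Real.log (2 / δ) ≤ Real.log (K / δ) := by gcongr
  have hc0 : 0 ≤ c := le_trans (by positivity) hc
  refine Real.sqrt_le_sqrt ?_
  calc Real.log (2 / δ) / (2 * m) = 1 / (2 * m) * Real.log (2 / δ) := by ring
    _ ≤ c * (Real.log (K / δ) + A) := by gcongr; linarith

end Rates

theorem multi_source_generalization_bound_general [MeasurableSpace X] {k m : ℕ}
    (hk : 0 < k) (hm : 0 < m)
    (DT : Measure X) (DS : Fin k → Measure X)
    [IsProbabilityMeasure DT] [∀ i, IsProbabilityMeasure (DS i)]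
    (fT : X → ℝ) (fS : Fin k → X → ℝ)
    (hfT : Integrable fT DT) (hfS : ∀ i, Measurable (fS i))
    (hfSb : ∀ i x, fS i x ∈ Set.Icc (0 : ℝ) 1)
    (H : Set (X → ℝ)) (hbin : ∀ h ∈ H, IsBinary h) (hmeas : ∀ h ∈ H, Measurable h)
    (hstar : X → ℝ) (hstarH : hstar ∈ H)
    (δ : ℝ) (hδ : 0 < δ) (hδ1 : δ < 1) :
    ENNReal.ofReal (1 - δ) ≤
      ((Measure.pi fun _ : Fin m => DT).prod
          (Measure.pi fun i : Fin k => Measure.pi fun _ : Fin m => DS i))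
        {ω : (Fin m → X) × (Fin k → Fin m → X) | ∀ h ∈ H,
          errE DT h fT
            ≤ (⨆ i, empRisk (ω.2 i) h (fS i))
              + √(Real.log (2 / δ) / (2 * m))
              + (1 / 2) * dHmulti (symmDiffClass H) (empMeasure ω.1)
                  (fun i => empMeasure (ω.2 i))
              + √(Real.log (2 / δ) / (2 * m))
              + (errE DT hstar fT + ⨆ i, errE (DS i) hstar (fS i))} := by
  let i₀ : Fin k := ⟨0, hk⟩
  set t := √(Real.log (2 / δ) / (2 * m))
  have ht : 0 < t :=
    Real.sqrt_pos.2 (div_pos (Real.log_pos ((one_lt_div hδ).2 (by linarith))) (by positivity))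
  have hexp : Real.exp (-(2 * m * t ^ 2)) = δ / 2 :=
    exp_neg_two_mul_sq_sqrt_log_div hm hδ (by linarith)
  have hconf : ENNReal.ofReal (1 - δ) ≤
      ENNReal.ofReal (1 - δ / 2) * ENNReal.ofReal (1 - δ / 2) := by
    rw [← ENNReal.ofReal_mul (by linarith)]
    exact ENNReal.ofReal_le_ofReal (by nlinarith)
  have hsource := le_prod_measure_forall_errE_le hm DS i₀ hfT (hfS i₀) (hfSb i₀) hbin hmeas
    hstarH ht
  rw [hexp] at hsource
  refine (hconf.trans hsource).trans (measure_mono fun ω hω h hh => (hω h hh).trans ?_)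
  gcongr
  · exact le_ciSup (f := fun i => empRisk (ω.2 i) h (fS i)) (Set.finite_range _).bddAbove i₀
  · exact dHdiv_le_dHmulti (symmDiffClass H) _ (fun i => empMeasure (ω.2 i)) i₀
  · exact le_ciSup (f := fun i => errE (DS i) hstar (fS i)) (Set.finite_range _).bddAbove i₀

/-- Main generalization bound for multiple source domain adaptation
(Theorem 5 of the paper). -/
theorem multi_source_generalization_bound [MeasurableSpace X] {k d m : ℕ}
    (hk : 0 < k) (hmd : 2 * d ≤ m)
    (DT : Measure X) (DS : Fin k → Measure X)
    [IsProbabilityMeasure DT] [∀ i, IsProbabilityMeasure (DS i)]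
    (fT : X → ℝ) (fS : Fin k → X → ℝ)
    (hfT : Measurable fT) (hfS : ∀ i, Measurable (fS i))
    (hfTb : ∀ x, fT x ∈ Set.Icc (0:ℝ) 1) (hfSb : ∀ i x, fS i x ∈ Set.Icc (0:ℝ) 1)
    (H : Set (X → ℝ)) (hbin : ∀ h ∈ H, IsBinary h) (hmeas : ∀ h ∈ H, Measurable h)
    (hVC : VCDimEq (supports H) d)
    (hstar : X → ℝ) (hstarH : hstar ∈ H)
    (hstarOpt : ∀ h ∈ H,
      errE DT hstar fT + ⨆ i, errE (DS i) hstar (fS i)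
        ≤ errE DT h fT + ⨆ i, errE (DS i) h (fS i))
    (lam : ℝ) (hlam : lam = errE DT hstar fT + ⨆ i, errE (DS i) hstar (fS i))
    (δ : ℝ) (hδ : 0 < δ) (hδ1 : δ < 1) :
    ENNReal.ofReal (1 - δ) ≤
      ((Measure.pi fun _ : Fin m => DT).prod
          (Measure.pi fun i : Fin k => Measure.pi fun _ : Fin m => DS i))
        {ω : (Fin m → X) × (Fin k → Fin m → X) | ∀ h ∈ H,
          errE DT h fT
            ≤ (⨆ i, empRisk (ω.2 i) h (fS i))
              + Real.sqrt ((1 / (2 * m))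
                  * (Real.log (4 * k / δ) + d * Real.log (m * Real.exp 1 / d)))
              + (1 / 2) * dHmulti (symmDiffClass H) (empMeasure ω.1)
                  (fun i => empMeasure (ω.2 i))
              + Real.sqrt ((2 / m)
                  * (Real.log (8 * k / δ) + 2 * d * Real.log (m * Real.exp 1 / (2 * d))))
              + lam} := by
  obtain rfl | hm := m.eq_zero_or_pos
  · obtain rfl : d = 0 := by omega
    have hH : H.Subsingleton := subsingleton_of_vcDimEq_supports_zero hbin hVC
    refine (ENNReal.ofReal_le_one.2 (by linarith)).trans_eq
      ((congrArg _ (Set.eq_univ_of_forall fun ω h hh => ?_)).trans measure_univ).symm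
    rw [hH hh hstarH, hlam]
    have hrisk := Real.iSup_nonneg fun i => empRisk_nonneg (ω.2 i) hstar (fS i)
    have hdiv := dHmulti_nonneg (symmDiffClass H) (empMeasure ω.1) fun i => empMeasure (ω.2 i)
    exact le_add_of_nonneg_of_le (by positivity)
      (le_add_of_nonneg_right (Real.iSup_nonneg fun i => errE_nonneg (DS i) hstar (fS i)))
  · have hk1 : (1 : ℝ) ≤ k := mod_cast hk
    have hmd2 : 2 * (d : ℝ) ≤ m := mod_cast hmd
    refine (multi_source_generalization_bound_general hk hm DT DS fT fS
      (.of_mem_Icc 0 1 hfT.aemeasurable (.of_forall hfTb)) hfS hfSb H hbin hmeas hstar hstarH δ hδ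
      hδ1).trans (measure_mono fun ω hω h hh => (hω h hh).trans ?_)
    rw [hlam]
    gcongr _ + ?_ + _ + ?_ + _
    · exact sqrt_log_div_le_sqrt_mul_log_add hδ (by linarith) le_rfl (by linarith)
        (mul_log_mul_exp_one_div_nonneg (by positivity) (by linarith))
    · exact sqrt_log_div_le_sqrt_mul_log_add hδ (by linarith) (by field_simp; norm_num)
        (by linarith) (mul_log_mul_exp_one_div_nonneg (by positivity) hmd2)
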